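/- The right-comb completion is monotone from the associahedral order to the Tamari order: if P ≤ Q in 𝔎_m (m ≥ 2), then rc(P) ≤ rc(Q) in the Tamari order, where fully parenthesized words on W_m are identified with planar binary trees with m leaves via the standard bijection (the interval of P over each internal node is the set of leaf labels of the subtree above that node). -/

import Mathlib

/-!
The proof compares bracket vectors. For a binary tree `t` and a leaf `j`, let `brk t j` be the
(exclusive) right end of the largest subtree whose leftmost leaf is `j`. Two facts are combined.

* A pointwise inequality of bracket vectors implies the Tamari relation
  (`PTree.tamariLE_of_brk_le`). Write `T = node T₁ T₂` with `a` leaves in `T₁`. No subtree of `T`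
  starting at a leaf `0 < j < a` reaches beyond `a`, so the same holds for `S`. Hence `S` can be
  rotated to some `node U V` in which `U` has `a` leaves, without changing the entries of the
  bracket vector at leaves other than `a` (`PTree.exists_split`); induction applies to `U`, `T₁`
  and to `V`, `T₂`.
* If `Q ⊆ P`, every `I ∈ rc P` lies in some `J ∈ rc Q ∪ {W_m}` with the same minimum
  (`exists_rc_superset`). Since `rc P` is laminar and contains `Q`, the interval `I` is nested with
  or disjoint from every member of `Q`. In the least block `b` of `Q` containing `I`, either
  `min I = min b`, and `J = b`, or `min I` is the minimum of a child of `b` which is neither the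
  first nor the last, and `J` is the suffix of `b` starting at that child.

Laminarity of `rc P` is read off the tree `S` representing it.
-/

/-! Parenthesized words on the linear order `W_m = Fin m` (following
Stasheff/Mac Lane as in "A_n monoidal categories"). -/

/-- `p` is a closed interval of `Fin m` (closed under betweenness). -/
def IsInterval {m : ℕ} (p : Finset (Fin m)) : Prop :=
  ∀ ⦃x y z : Fin m⦄, x ∈ p → z ∈ p → x ≤ y → y ≤ z → y ∈ p

/-- Any two members of `P` are nested or disjoint. -/
def Laminar {m : ℕ} (P : Finset (Finset (Fin m))) : Prop :=
  ∀ ⦃p⦄, p ∈ P → ∀ ⦃q⦄, q ∈ P → p ⊆ q ∨ q ⊆ p ∨ Disjoint p q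

/-- A parenthesized word on `W_m`: a finite laminar family of closed intervals,
each of cardinality at least `2` and strictly less than `m`. -/
def IsParenWord (m : ℕ) (P : Finset (Finset (Fin m))) : Prop :=
  (∀ p ∈ P, IsInterval p ∧ 2 ≤ p.card ∧ p.card < m) ∧ Laminar P

/-- The poset `𝔎_m` of parenthesized words on `W_m`, ordered by reverse
inclusion (`P ≤ Q` iff `Q ⊆ P`: more parentheses is smaller). -/
def KWord (m : ℕ) : Type := {P : Finset (Finset (Fin m)) // IsParenWord m P}

instance (m : ℕ) : PartialOrder (KWord m) where
  le P Q := Q.1 ⊆ P.1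
  le_refl P := Finset.Subset.refl _
  le_trans P Q R h h' := Finset.Subset.trans h' h
  le_antisymm P Q h h' := Subtype.ext (Finset.Subset.antisymm h' h)

@[simp] theorem KWord.le_def {m : ℕ} (P Q : KWord m) : P ≤ Q ↔ Q.1 ⊆ P.1 := ⟨fun h => h, fun h => h⟩

/-- The blocks of `P`: the members of `P` together with the full interval `W_m`. -/
def blocks {m : ℕ} (P : Finset (Finset (Fin m))) : Finset (Finset (Fin m)) :=
  insert Finset.univ P

open scoped Classical in
/-- The children of a block `b`: the maximal members of `P` strictly contained in `b`,
together with the singletons of elements of `b` not lying in any member of `P`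
strictly contained in `b`. -/
noncomputable def children {m : ℕ} (P : Finset (Finset (Fin m))) (b : Finset (Fin m)) :
    Finset (Finset (Fin m)) :=
  (P.filter fun p => p ⊂ b ∧ ∀ q ∈ P, q ⊂ b → p ⊆ q → p = q) ∪
    ((b.filter fun x => ∀ p ∈ P, p ⊂ b → x ∉ p).image fun x => {x})

/-- The valence of a block: its number of children. -/
noncomputable def valence {m : ℕ} (P : Finset (Finset (Fin m))) (b : Finset (Fin m)) : ℕ :=
  (children P b).card

open scoped Classical in
/-- The right-comb completion `rc(P)`: adjoin to `P`, for each block `b` of `P` with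
children `c₁ < c₂ < ⋯ < c_r` (listed left to right), the suffix intervals
`c_j ∪ c_{j+1} ∪ ⋯ ∪ c_r` for `2 ≤ j ≤ r - 1`, i.e. for each child `c` which is
neither the first nor the last child of `b`, the set of elements of `b` that are
`≥ min c`. -/
noncomputable def rc {m : ℕ} (P : Finset (Finset (Fin m))) : Finset (Finset (Fin m)) :=
  P ∪ (blocks P).biUnion fun b =>
    ((children P b).filter fun c =>
        (∃ c' ∈ children P b, ∃ x ∈ c', ∀ y ∈ c, x < y) ∧
        (∃ c' ∈ children P b, ∃ x ∈ c', ∀ y ∈ c, y < x)).image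
      fun c => b.filter fun x => ∃ y ∈ c, y ≤ x

/-- Planar binary trees. -/
inductive PTree : Type
  | leaf : PTree
  | node : PTree → PTree → PTree
deriving DecidableEq

namespace PTree

/-- The number of leaves of a planar binary tree. -/
def numLeaves : PTree → ℕ
  | leaf => 1
  | node l r => numLeaves l + numLeaves r

/-- One right rotation somewhere in a tree: replace a subtree
`node (node A B) C` by `node A (node B C)`. -/
inductive Rot : PTree → PTree → Prop
  | rotate (A B C : PTree) : Rot (node (node A B) C) (node A (node B C))
  | left {l l' : PTree} (r : PTree) : Rot l l' → Rot (node l r) (node l' r)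
  | right (l : PTree) {r r' : PTree} : Rot r r' → Rot (node l r) (node l r')

/-- The Tamari relation: the reflexive–transitive closure of right rotation. -/
def TamariLE : PTree → PTree → Prop := Relation.ReflTransGen Rot

end PTree

namespace PTree

/-- The leaf-label sets of all internal (node) subtrees of a tree whose leftmost leaf
has label `off` (leaves labelled consecutively from left to right). -/
def subtreeSets : PTree → ℕ → Finset (Finset ℕ)
  | leaf, _ => ∅
  | node l r, off =>
      insert (Finset.Ico off (off + numLeaves (node l r)))
        (subtreeSets l off ∪ subtreeSets r (off + numLeaves l))

/-- The parenthesized word associated to a planar binary tree under the standard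
bijection: the interval over each internal node except the root is the set of labels
(numbered from `0`) of the leaves of the subtree above that node. -/
def treeWord (t : PTree) : Finset (Finset ℕ) :=
  (subtreeSets t 0).erase (Finset.Ico 0 (numLeaves t))

end PTree

open PTree

/-! ### Bracket vectors and the Tamari order -/

namespace PTree

/-- The bracket vector: `brk t j` is the exclusive right end of the largest subtree of `t` whose
leftmost leaf is the `j`-th one, leaves being numbered from `0`. Only the values at
`j < numLeaves t` are meaningful. -/
def brk : PTree → ℕ → ℕ
  | leaf, _ => 1
  | node l r, j =>
      if j = 0 then numLeaves l + numLeaves r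
      else if j < numLeaves l then brk l j
      else numLeaves l + brk r (j - numLeaves l)

theorem numLeaves_pos : ∀ t : PTree, 0 < numLeaves t
  | leaf => Nat.one_pos
  | node l _ => Nat.add_pos_left (numLeaves_pos l) _

theorem brk_zero : ∀ t : PTree, brk t 0 = numLeaves t
  | leaf => rfl
  | node _ _ => by simp [brk, numLeaves]

theorem brk_node_left {l : PTree} (r : PTree) {j : ℕ} (h0 : 0 < j) (hj : j < numLeaves l) :
    brk (node l r) j = brk l j := by
  simp [brk, h0.ne', hj]

theorem brk_node_right (l r : PTree) (j : ℕ) :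
    brk (node l r) (numLeaves l + j) = numLeaves l + brk r j := by
  have := numLeaves_pos l
  simp [brk, this.ne']

theorem brk_le (t : PTree) : ∀ j, j < numLeaves t → brk t j ≤ numLeaves t := by
  induction t with
  | leaf => intro j _; simp [brk, numLeaves]
  | node l r ihl ihr =>
    intro j hj
    simp only [numLeaves] at hj ⊢
    simp only [brk]
    split_ifs with h1 h2
    · exact le_rfl
    · exact (ihl j h2).trans (Nat.le_add_right _ _)
    · have := ihr (j - numLeaves l) (by omega)
      omega

theorem lt_brk (t : PTree) : ∀ j, j < numLeaves t → j < brk t j := by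
  induction t with
  | leaf => intro j hj; simpa [brk, numLeaves] using hj
  | node l r ihl ihr =>
    intro j hj
    simp only [numLeaves] at hj
    simp only [brk]
    split_ifs with h1 h2
    · omega
    · exact ihl j h2
    · have := ihr (j - numLeaves l) (by omega)
      omega

theorem TamariLE.node_left {l l' : PTree} (r : PTree) (h : TamariLE l l') :
    TamariLE (node l r) (node l' r) :=
  Relation.ReflTransGen.lift (fun x => node x r) (fun _ _ h => Rot.left r h) _ _ h

theorem TamariLE.node_right (l : PTree) {r r' : PTree} (h : TamariLE r r') :
    TamariLE (node l r) (node l r') :=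
  Relation.ReflTransGen.lift (fun x => node l x) (fun _ _ h => Rot.right l h) _ _ h

/-- If no subtree starting strictly between `0` and `a` reaches beyond `a`, right rotations along
the left branch bring the tree into a form whose left factor has exactly `a` leaves. They change
the bracket vector only at `a`. -/
theorem exists_split (S : PTree) (a : ℕ) (ha0 : 0 < a) (ham : a < numLeaves S)
    (h : ∀ j, 0 < j → j < a → brk S j ≤ a) :
    ∃ U V, TamariLE S (node U V) ∧ numLeaves U = a ∧ a + numLeaves V = numLeaves S ∧
      (∀ j, 0 < j → j < a → brk U j = brk S j) ∧
      (∀ j, 0 < j → j < numLeaves V → a + brk V j = brk S (a + j)) := by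
  induction S with
  | leaf => simp only [numLeaves] at ham; omega
  | node l r ihl _ =>
    rcases lt_trichotomy (numLeaves l) a with hla | hla | hla
    · -- the right factor starts before `a` and ends beyond it
      have h1 := h (numLeaves l) (numLeaves_pos l) hla
      have h2 := brk_node_right l r 0
      rw [brk_zero, add_zero] at h2
      simp only [numLeaves] at ham
      omega
    · subst hla
      exact ⟨l, r, Relation.ReflTransGen.refl, rfl, rfl,
        fun j h0 hj => (brk_node_left r h0 hj).symm, fun j _ _ => (brk_node_right l r j).symm⟩
    · obtain ⟨U, V, hle, hU, hV, hbU, hbV⟩ := ihl hla fun j h0 hj => by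
        rw [← brk_node_left r h0 (hj.trans hla)]
        exact h j h0 hj
      refine ⟨U, node V r, (hle.node_left r).trans (.single (.rotate U V r)), hU, ?_, ?_, ?_⟩
      · simp only [numLeaves]
        omega
      · intro j h0 hj
        rw [hbU j h0 hj, brk_node_left r h0 (hj.trans hla)]
      · intro j h0 _
        rcases lt_or_ge j (numLeaves V) with hjV | hjV
        · rw [brk_node_left r h0 hjV, hbV j h0 hjV, brk_node_left r (by omega) (by omega)]
        · obtain ⟨k, rfl⟩ := Nat.exists_eq_add_of_le hjV
          rw [brk_node_right, ← add_assoc, ← add_assoc, hV, brk_node_right]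

theorem tamariLE_of_brk_le (T : PTree) : ∀ S : PTree, numLeaves S = numLeaves T →
    (∀ j, 0 < j → j < numLeaves T → brk S j ≤ brk T j) → TamariLE S T := by
  induction T with
  | leaf =>
    intro S hS _
    cases S with
    | leaf => exact Relation.ReflTransGen.refl
    | node l r =>
      have := numLeaves_pos l
      have := numLeaves_pos r
      simp only [numLeaves] at hS
      omega
  | node T₁ T₂ ih₁ ih₂ =>
    intro S hS h
    have p1 := numLeaves_pos T₁
    have p2 := numLeaves_pos T₂
    simp only [numLeaves] at hS h
    have h1 : ∀ j, 0 < j → j < numLeaves T₁ → brk S j ≤ brk T₁ j := fun j h0 hj => by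
      rw [← brk_node_left T₂ h0 hj]
      exact h j h0 (by omega)
    obtain ⟨U, V, hle, hU, hV, hbU, hbV⟩ := exists_split S (numLeaves T₁) p1 (by omega)
      fun j h0 hj => (h1 j h0 hj).trans (brk_le T₁ j hj)
    have hUT : TamariLE U T₁ := ih₁ U hU fun j h0 hj => by
      rw [hbU j h0 hj]
      exact h1 j h0 hj
    have hVT : TamariLE V T₂ := ih₂ V (by omega) fun j h0 hj => by
      have e1 := hbV j h0 (by omega)
      have e2 := h (numLeaves T₁ + j) (by omega) (by omega)
      rw [brk_node_right] at e2
      omega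
    exact hle.trans ((hUT.node_left V).trans (hVT.node_right T₁))

/-! ### Subtree intervals -/

theorem exists_eq_Ico_of_mem (t : PTree) : ∀ off, ∀ s ∈ subtreeSets t off,
    ∃ a b, s = Finset.Ico a b ∧ off ≤ a ∧ a < b ∧ b ≤ off + numLeaves t := by
  induction t with
  | leaf => intro off s hs; simp [subtreeSets] at hs
  | node l r ihl ihr =>
    intro off s hs
    have p1 := numLeaves_pos l
    simp only [subtreeSets, Finset.mem_insert, Finset.mem_union] at hs
    simp only [numLeaves] at hs ⊢
    rcases hs with rfl | hs | hs
    · exact ⟨_, _, rfl, le_rfl, by omega, le_rfl⟩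
    · obtain ⟨a, b, rfl, h1, h2, h3⟩ := ihl _ _ hs
      exact ⟨a, b, rfl, h1, h2, by omega⟩
    · obtain ⟨a, b, rfl, h1, h2, h3⟩ := ihr _ _ hs
      exact ⟨a, b, rfl, by omega, h2, by omega⟩

theorem subtreeSets_laminar (t : PTree) : ∀ off, ∀ p ∈ subtreeSets t off,
    ∀ q ∈ subtreeSets t off, p ⊆ q ∨ q ⊆ p ∨ Disjoint p q := by
  induction t with
  | leaf => intro off s hs; simp [subtreeSets] at hs
  | node l r ihl ihr =>
    intro off
    have sub : ∀ s ∈ subtreeSets (node l r) off,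
        s ⊆ Finset.Ico off (off + numLeaves (node l r)) := fun s hs => by
      obtain ⟨a, b, rfl, h1, _, h3⟩ := exists_eq_Ico_of_mem _ _ _ hs
      exact Finset.Ico_subset_Ico h1 h3
    have disj : ∀ p ∈ subtreeSets l off, ∀ q ∈ subtreeSets r (off + numLeaves l),
        Disjoint p q := fun p hp q hq => by
      obtain ⟨a, b, rfl, _, _, h3⟩ := exists_eq_Ico_of_mem _ _ _ hp
      obtain ⟨c, d, rfl, h1, _, _⟩ := exists_eq_Ico_of_mem _ _ _ hq
      rw [Finset.disjoint_left]
      intro x hx hx'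
      rw [Finset.mem_Ico] at hx hx'
      omega
    intro p hp q hq
    have hp' := sub p hp
    have hq' := sub q hq
    simp only [subtreeSets, Finset.mem_insert, Finset.mem_union] at hp hq
    rcases hp with rfl | hp | hp
    · exact Or.inr (Or.inl hq')
    · rcases hq with rfl | hq | hq
      · exact Or.inl hp'
      · exact ihl _ _ hp _ hq
      · exact Or.inr (Or.inr (disj _ hp _ hq))
    · rcases hq with rfl | hq | hq
      · exact Or.inl hp'
      · exact Or.inr (Or.inr (disj _ hq _ hp).symm)
      · exact ihr _ _ hp _ hq

/-- The bracket vector entry at `j` is attained by a subtree, unless it is that of a bare leaf. -/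
theorem brk_attained (t : PTree) : ∀ off j, j < numLeaves t →
    brk t j = j + 1 ∨ Finset.Ico (off + j) (off + brk t j) ∈ subtreeSets t off := by
  induction t with
  | leaf =>
    intro off j hj
    simp only [numLeaves, Nat.lt_one_iff] at hj
    simp [hj, brk]
  | node l r ihl ihr =>
    intro off j hj
    simp only [subtreeSets, Finset.mem_insert, Finset.mem_union]
    simp only [numLeaves] at hj ⊢
    rcases Nat.eq_zero_or_pos j with rfl | h0
    · right; left
      rw [brk_zero]
      rfl
    rcases lt_or_ge j (numLeaves l) with hjl | hjl
    · rw [brk_node_left r h0 hjl]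
      rcases ihl off j hjl with h | h
      · exact Or.inl h
      · exact Or.inr (Or.inr (Or.inl h))
    · obtain ⟨k, rfl⟩ := Nat.exists_eq_add_of_le hjl
      rw [brk_node_right]
      rcases ihr (off + numLeaves l) k (by omega) with h | h
      · left; omega
      · right; right; right
        rwa [← add_assoc, ← add_assoc]

/-- The bracket vector bounds the right ends of all subtree intervals. -/
theorem le_brk_of_mem (t : PTree) : ∀ off j k, j < k →
    Finset.Ico (off + j) (off + k) ∈ subtreeSets t off → k ≤ brk t j := by
  induction t with
  | leaf => intro off j k _ h; simp [subtreeSets] at h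
  | node l r ihl ihr =>
    intro off j k hjk h
    have p1 := numLeaves_pos l
    -- a nonempty `Ico` determines its end points
    have ends : ∀ a b, a < b → Finset.Ico (off + j) (off + k) = Finset.Ico a b →
        off + j = a ∧ off + k = b := fun a b hab e => by
      have e' : Set.Ico (off + j) (off + k) = Set.Ico a b := by
        rw [← Finset.coe_Ico, ← Finset.coe_Ico, e]
      exact (Set.Ico_eq_Ico_iff (Or.inl (by omega))).1 e'
    simp only [subtreeSets, Finset.mem_insert, Finset.mem_union] at h
    simp only [numLeaves] at h
    rcases h with h | h | h
    · obtain ⟨e1, e2⟩ := ends _ _ (by omega) h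
      obtain rfl : j = 0 := by omega
      rw [brk_zero]
      simp only [numLeaves]
      omega
    · obtain ⟨a, b, e, h1, h2, h3⟩ := exists_eq_Ico_of_mem _ _ _ h
      obtain ⟨e1, e2⟩ := ends _ _ h2 e
      rcases Nat.eq_zero_or_pos j with rfl | h0
      · rw [brk_zero]
        simp only [numLeaves]
        omega
      · rw [brk_node_left r h0 (by omega)]
        exact ihl off j k hjk h
    · obtain ⟨a, b, e, h1, h2, h3⟩ := exists_eq_Ico_of_mem _ _ _ h
      obtain ⟨e1, e2⟩ := ends _ _ h2 e
      obtain ⟨j', rfl⟩ := Nat.exists_eq_add_of_le (show numLeaves l ≤ j by omega)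
      obtain ⟨k', rfl⟩ := Nat.exists_eq_add_of_le (show numLeaves l ≤ k by omega)
      rw [brk_node_right]
      rw [← add_assoc, ← add_assoc] at h
      have := ihr (off + numLeaves l) j' k' (by omega) h
      omega

end PTree

/-! ### Right-comb completions -/

theorem mem_children {m : ℕ} {P : Finset (Finset (Fin m))} {b c : Finset (Fin m)} :
    c ∈ children P b ↔
      (c ∈ P ∧ c ⊂ b ∧ ∀ q ∈ P, q ⊂ b → c ⊆ q → c = q) ∨
        ∃ x, (x ∈ b ∧ ∀ p ∈ P, p ⊂ b → x ∉ p) ∧ {x} = c := by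
  simp only [children, Finset.mem_union, Finset.mem_filter, Finset.mem_image]

theorem exists_child {m : ℕ} (P : Finset (Finset (Fin m))) {b : Finset (Fin m)} {x : Fin m}
    (hx : x ∈ b) : ∃ c ∈ children P b, x ∈ c := by
  classical
  by_cases h : ∀ p ∈ P, p ⊂ b → x ∉ p
  · exact ⟨{x}, mem_children.2 (Or.inr ⟨x, ⟨hx, h⟩, rfl⟩), Finset.mem_singleton_self x⟩
  · push Not at h
    obtain ⟨p, hp, hpb, hxp⟩ := h
    obtain ⟨c, hpc, hc⟩ := (P.filter (· ⊂ b)).exists_le_maximal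
      (Finset.mem_filter.2 ⟨hp, hpb⟩)
    have hc' := Finset.mem_filter.1 hc.1
    exact ⟨c, mem_children.2 (Or.inl ⟨hc'.1, hc'.2, fun q hq hqb hcq =>
      hcq.antisymm (hc.2 (Finset.mem_filter.2 ⟨hq, hqb⟩) hcq)⟩), hpc hxp⟩

theorem mem_rc {m : ℕ} {P : Finset (Finset (Fin m))} {s : Finset (Fin m)} :
    s ∈ rc P ↔ s ∈ P ∨ ∃ b ∈ blocks P, ∃ c ∈ children P b,
      (∃ c' ∈ children P b, ∃ x ∈ c', ∀ y ∈ c, x < y) ∧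
      (∃ c' ∈ children P b, ∃ x ∈ c', ∀ y ∈ c, y < x) ∧
      (∀ x, x ∈ s ↔ x ∈ b ∧ ∃ y ∈ c, y ≤ x) := by
  simp only [rc, Finset.mem_union, Finset.mem_biUnion, Finset.mem_image, Finset.mem_filter,
    and_assoc]
  refine or_congr_right (exists_congr fun b => and_congr_right fun _ => exists_congr fun c =>
    and_congr_right fun _ => and_congr_right fun _ => and_congr_right fun _ => ?_)
  rw [eq_comm, Finset.ext_iff]
  simp only [Finset.mem_filter]

/-- A set with minimum `i` and at least two elements, nested with or disjoint from every member
of `Q`, lies in a member of `rc Q`, or in the full interval, having the same minimum `i`. -/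
theorem exists_rc_superset {m : ℕ} {Q : Finset (Finset (Fin m))} (hQ : ∀ q ∈ Q, IsInterval q)
    {I : Finset (Fin m)} {i k : Fin m} (hi : i ∈ I) (hmin : ∀ x ∈ I, i ≤ x)
    (hk : k ∈ I) (hik : k ≠ i)
    (hcomp : ∀ q ∈ Q, q ⊆ I ∨ I ⊆ q ∨ Disjoint q I) :
    ∃ J ∈ insert Finset.univ (rc Q), I ⊆ J ∧ ∀ x ∈ J, i ≤ x := by
  classical
  obtain ⟨b, -, hb⟩ := ((blocks Q).filter (I ⊆ ·)).exists_le_minimal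
    (a := Finset.univ) (by simp [blocks])
  obtain ⟨hbQ, hIb⟩ := Finset.mem_filter.1 hb.1
  have hnot : ∀ q ∈ Q, q ⊂ b → ¬ I ⊆ q := fun q hq hqb hIq =>
    hqb.2 (hb.2 (Finset.mem_filter.2 ⟨Finset.mem_insert_of_mem hq, hIq⟩) hqb.1)
  by_cases hall : ∀ x ∈ b, i ≤ x
  · refine ⟨b, ?_, hIb, hall⟩
    rcases Finset.mem_insert.1 hbQ with h | h
    · exact Finset.mem_insert.2 (Or.inl h)
    · exact Finset.mem_insert_of_mem (mem_rc.2 (Or.inl h))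
  push Not at hall
  obtain ⟨x₀, hx₀, hx₀i⟩ := hall
  obtain ⟨c, hc, hic⟩ := exists_child Q (hIb hi)
  -- the child `c` containing `i` is an interval starting at `i`, and does not contain `I`
  have key : (∀ y ∈ c, i ≤ y) ∧ ¬ I ⊆ c ∧ IsInterval c := by
    rcases mem_children.1 hc with ⟨hcQ, hcb, -⟩ | ⟨x, -, rfl⟩
    · refine ⟨?_, hnot c hcQ hcb, hQ c hcQ⟩
      rcases hcomp c hcQ with h | h | h
      · exact fun y hy => hmin y (h hy)
      · exact absurd h (hnot c hcQ hcb)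
      · exact absurd hi (Finset.disjoint_left.1 h hic)
    · obtain rfl := Finset.mem_singleton.1 hic
      refine ⟨fun y hy => (Finset.mem_singleton.1 hy).ge, fun h =>
        hik (Finset.mem_singleton.1 (h hk)), ?_⟩
      intro u v w hu hw huv hvw
      rw [Finset.mem_singleton] at hu hw ⊢
      subst hu
      subst hw
      exact le_antisymm hvw huv
  obtain ⟨hcmin, hIc, hcint⟩ := key
  obtain ⟨y₀, hy₀, hy₀c⟩ := Finset.not_subset.1 hIc
  obtain ⟨c₁, hc₁, hx₀c₁⟩ := exists_child Q hx₀
  obtain ⟨c₂, hc₂, hy₀c₂⟩ := exists_child Q (hIb hy₀)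
  refine ⟨b.filter fun x => ∃ y ∈ c, y ≤ x, Finset.mem_insert_of_mem (mem_rc.2 (Or.inr
    ⟨b, hbQ, c, hc, ⟨c₁, hc₁, x₀, hx₀c₁, fun y hy => hx₀i.trans_le (hcmin y hy)⟩,
      ⟨c₂, hc₂, y₀, hy₀c₂, fun y hy => ?_⟩, fun x => Finset.mem_filter⟩)), ?_, ?_⟩
  · by_contra hlt
    exact hy₀c (hcint hic hy (hmin y₀ hy₀) (not_lt.1 hlt))
  · exact fun x hx => Finset.mem_filter.2 ⟨hIb hx, i, hic, hmin x hx⟩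
  · intro x hx
    obtain ⟨-, y, hy, hyx⟩ := Finset.mem_filter.1 hx
    exact (hcmin y hy).trans hyx

/-- The right-comb completion is monotone from the associahedral
order on `𝔎_m` to the Tamari order: if `P ≤ Q` in `𝔎_m` and `S`, `T` are the planar
binary trees with `m` leaves corresponding to `rc P` and `rc Q` under the standard
bijection, then `S ≤ T` in the Tamari order. -/
theorem rc_monotone_tamari (m : ℕ) (hm : 2 ≤ m) (P Q : KWord m) (hPQ : P ≤ Q)
    (S T : PTree) (hSm : S.numLeaves = m) (hTm : T.numLeaves = m)
    (hS : treeWord S = (rc P.1).image fun p => p.image Fin.val)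
    (hT : treeWord T = (rc Q.1).image fun p => p.image Fin.val) :
    TamariLE S T := by
  refine tamariLE_of_brk_le T S (hSm.trans hTm.symm) fun j h0 hj => ?_
  rw [hTm] at hj
  rcases brk_attained S 0 j (hSm ▸ hj) with h | h
  · have := lt_brk T j (hTm ▸ hj)
    omega
  by_cases hone : brk S j ≤ j + 1
  · have := lt_brk T j (hTm ▸ hj)
    omega
  have hbm : brk S j ≤ m := hSm ▸ brk_le S j (hSm ▸ hj)
  simp only [zero_add] at h
  have hinS : ∀ p ∈ rc P.1, p.image Fin.val ∈ subtreeSets S 0 := fun p hp =>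
    Finset.mem_of_mem_erase (a := Finset.Ico 0 S.numLeaves)
      (show _ ∈ treeWord S from hS ▸ Finset.mem_image_of_mem _ hp)
  have hinT : ∀ p ∈ insert Finset.univ (rc Q.1), p.image Fin.val ∈ subtreeSets T 0 ∨
      p = Finset.univ := fun p hp => by
    rcases Finset.mem_insert.1 hp with hp | hp
    · exact Or.inr hp
    · exact Or.inl (Finset.mem_of_mem_erase (a := Finset.Ico 0 T.numLeaves)
        (show _ ∈ treeWord T from hT ▸ Finset.mem_image_of_mem _ hp))
  have hmem : Finset.Ico j (brk S j) ∈ treeWord S := by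
    refine Finset.mem_erase.2 ⟨fun e => ?_, h⟩
    have h0' : 0 ∈ Finset.Ico 0 S.numLeaves := Finset.mem_Ico.2 ⟨le_rfl, numLeaves_pos S⟩
    rw [← e, Finset.mem_Ico] at h0'
    omega
  rw [hS] at hmem
  obtain ⟨I, hI, hIeq⟩ := Finset.mem_image.1 hmem
  have memI : ∀ x : Fin m, x ∈ I ↔ j ≤ x.1 ∧ x.1 < brk S j := fun x => by
    rw [← Finset.mem_Ico, ← hIeq]
    exact (Finset.mem_image.trans ⟨fun ⟨y, hy, e⟩ => Fin.ext e ▸ hy, fun hx => ⟨x, hx, rfl⟩⟩).symm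
  obtain ⟨J, hJ, hIJ, hJmin⟩ := exists_rc_superset (Q := Q.1) (fun q hq => (Q.2.1 q hq).1)
    (I := I) (i := ⟨j, hj⟩) (k := ⟨j + 1, by omega⟩)
    ((memI _).2 ⟨le_rfl, by simp only; omega⟩) (fun x hx => ((memI x).1 hx).1)
    ((memI _).2 ⟨by simp, by simp only; omega⟩) (by simp [Fin.ext_iff])
    (fun q hq => by
      have hlam := subtreeSets_laminar S 0 _ (hinS q (mem_rc.2 (Or.inl (hPQ hq)))) _ (hinS I hI)
      rwa [Finset.image_subset_image_iff Fin.val_injective,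
        Finset.image_subset_image_iff Fin.val_injective,
        Finset.disjoint_image Fin.val_injective] at hlam)
  rcases hinT J hJ with hJT | rfl
  · obtain ⟨a, b, e, _, hab, _⟩ := exists_eq_Ico_of_mem _ _ _ hJT
    have toJ : ∀ x : ℕ, a ≤ x → x < b → ∃ y ∈ J, y.1 = x := fun x h1 h2 =>
      Finset.mem_image.1 (e ▸ Finset.mem_Ico.2 ⟨h1, h2⟩)
    have ofJ : ∀ x : Fin m, x ∈ I → a ≤ x.1 ∧ x.1 < b := fun x hx =>
      Finset.mem_Ico.1 (e ▸ Finset.mem_image_of_mem Fin.val (hIJ hx))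
    obtain ⟨y, hy, hya⟩ := toJ a le_rfl hab
    have h1 : j ≤ y.1 := hJmin y hy
    have h2 := ofJ ⟨j, hj⟩ ((memI _).2 ⟨le_rfl, by simp only; omega⟩)
    have h3 := ofJ ⟨brk S j - 1, by omega⟩ ((memI _).2 ⟨by simp only; omega, by simp only; omega⟩)
    simp only at h2 h3
    obtain rfl : a = j := by omega
    rw [e] at hJT
    have := le_brk_of_mem T 0 a b hab (by simpa using hJT)
    omega
  · -- the full interval contains `0 < j`
    have h1 : j ≤ 0 := hJmin ⟨0, by omega⟩ (Finset.mem_univ _)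
    omega
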